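/- arXiv:1807.11375 — 2 statements merged into one kernel-verified Lean document; each statement's English description precedes it below -/
import Mathlib

section
/- Let P ⊆ ℝ^d be a closed spanning pointed convex cone, A ≠ ℝ^d a P-module with A ∩ (−Ω) = ∅, where Ω is the interior of P. For the shift isometric representation {S^A_x}_{x∈P} on L²(A) given by (S^A_x f)(y) = f(y−x) if y−x ∈ A and 0 otherwise, one has: for every φ ∈ C_c(Int(A)) and every a ∈ Ω, (S^A_{ta})* φ = 0 for all sufficiently large t > 0. Consequently the representation is pure: ⋂_{t≥0} S^A_{ta}(L²(A)) = {0} for every a ∈ Ω. -/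
open MeasureTheory ContinuousLinearMap

theorem srp_key {d : ℕ} (P A : Set (EuclideanSpace ℝ (Fin d)))
    (hcone : ∀ (c : ℝ), 0 ≤ c → ∀ x ∈ P, c • x ∈ P)
    (hA_disj : A ∩ (-(interior P)) = ∅) (a : EuclideanSpace ℝ (Fin d))
    (ha : a ∈ interior P) (R : ℝ) :
    ∃ t₀ : ℝ, 0 ≤ t₀ ∧ ∀ t ≥ t₀, ∀ y, ‖y‖ ≤ R → y - t • a ∉ A := by
  obtain ⟨r, hr, hball⟩ := Metric.isOpen_iff.1 isOpen_interior a ha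
  refine ⟨(|R| + 1) / r, by positivity, fun t ht y hy hyA => ?_⟩
  have hR : |R| + 1 ≤ t * r := (div_le_iff₀ hr).1 ht
  have ht0 : 0 < t := lt_of_lt_of_le (by positivity) ht
  have hlt : ‖y‖ < t * r := by
    have := le_abs_self R
    linarith
  have hsub : Metric.ball (t • a) (t * r) ⊆ P := by
    intro z hz
    have h1 : t⁻¹ • z ∈ Metric.ball a r := by
      rw [mem_ball_iff_norm] at hz ⊢
      have : t⁻¹ • z - a = t⁻¹ • (z - t • a) := by
        rw [smul_sub, smul_smul, inv_mul_cancel₀ ht0.ne', one_smul]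
      rw [this, norm_smul, Real.norm_of_nonneg (by positivity), inv_mul_lt_iff₀ ht0]
      exact hz
    have h2 := hcone t ht0.le _ (interior_subset (hball h1))
    rwa [smul_smul, mul_inv_cancel₀ ht0.ne', one_smul] at h2
  have hint : t • a - y ∈ interior P := by
    refine interior_maximal hsub Metric.isOpen_ball ?_
    rw [mem_ball_iff_norm]
    simpa using hlt
  have : y - t • a ∈ A ∩ (-(interior P)) := ⟨hyA, by simpa using hint⟩
  rw [hA_disj] at this
  exact this

/-- For the shift isometric representation of a closed spanning pointed convex cone `P`
on `L²(A)`, where `A ≠ ℝ^d` is a `P`-module with `A ∩ (-Ω) = ∅`: for every continuous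
compactly supported `φ` with support in the interior of `A` and every `a` in the interior
of `P`, `(S^A_{ta})^* φ = 0` for all sufficiently large `t`; consequently the
representation is pure. -/
theorem shift_representation_pure {d : ℕ}
    (P A : Set (EuclideanSpace ℝ (Fin d)))
    (hclosed : IsClosed P) (hconv : Convex ℝ P)
    (hcone : ∀ (c : ℝ), 0 ≤ c → ∀ x ∈ P, c • x ∈ P)
    (hspan : ∀ x : EuclideanSpace ℝ (Fin d), ∃ a ∈ P, ∃ b ∈ P, x = a - b)
    (hpointed : P ∩ (-P) = {0})
    (hA_ne : A.Nonempty) (hA_closed : IsClosed A)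
    (hA_mod : ∀ x ∈ A, ∀ p ∈ P, x + p ∈ A)
    (hA_proper : A ≠ Set.univ)
    (hA_disj : A ∩ (-(interior P)) = ∅)
    (S : EuclideanSpace ℝ (Fin d) →
      (Lp ℂ 2 (volume.restrict A) →L[ℂ] Lp ℂ 2 (volume.restrict A)))
    (hS : ∀ x ∈ P, ∀ f : Lp ℂ 2 (volume.restrict A),
      (S x f : EuclideanSpace ℝ (Fin d) → ℂ) =ᵐ[volume.restrict A]
        fun y => Set.indicator A (⇑f) (y - x)) :
    (∀ (φ : EuclideanSpace ℝ (Fin d) → ℂ), Continuous φ → HasCompactSupport φ →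
        tsupport φ ⊆ interior A →
      ∀ fφ : Lp ℂ 2 (volume.restrict A),
        (fφ : EuclideanSpace ℝ (Fin d) → ℂ) =ᵐ[volume.restrict A] φ →
      ∀ a ∈ interior P, ∃ t₀ : ℝ, 0 ≤ t₀ ∧ ∀ t ≥ t₀,
        ContinuousLinearMap.adjoint (S (t • a)) fφ = 0) ∧
    (∀ a ∈ interior P, (⋂ t ∈ Set.Ici (0 : ℝ), Set.range (S (t • a))) = {0}) := by
  constructor
  · intro φ _ hφc _ fφ hfφ a ha
    obtain ⟨R, hR⟩ := hφc.isCompact.isBounded.exists_norm_le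
    obtain ⟨t₀, h0, ht⟩ := srp_key P A hcone hA_disj a ha R
    refine ⟨t₀, h0, fun t htt => ?_⟩
    have htP : t • a ∈ P := hcone t (h0.trans htt) a (interior_subset ha)
    refine ext_inner_right ℂ fun g => ?_
    rw [ContinuousLinearMap.adjoint_inner_left, inner_zero_left, L2.inner_def]
    refine integral_eq_zero_of_ae ?_
    filter_upwards [hfφ, hS _ htP g] with y h1 h2
    rw [h1, h2]
    by_cases hy : φ y = 0
    · simp [hy]
    · rw [Set.indicator_of_notMem (ht t htt y (hR y (subset_tsupport φ hy)))]
      simp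
  · intro a ha
    ext f
    simp only [Set.mem_iInter, Set.mem_singleton_iff, Set.mem_Ici]
    constructor
    · intro hf
      rw [Lp.eq_zero_iff_ae_eq_zero]
      have : ∀ n : ℕ, ∀ᵐ y ∂(volume.restrict A), ‖y‖ ≤ n → f y = 0 := by
        intro n
        obtain ⟨t₀, h0, ht⟩ := srp_key P A hcone hA_disj a ha n
        obtain ⟨g, hg⟩ := hf t₀ h0
        have htP : t₀ • a ∈ P := hcone t₀ h0 a (interior_subset ha)
        have h2 := hS _ htP g
        rw [hg] at h2
        filter_upwards [h2] with y h2 hy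
        rw [h2, Set.indicator_of_notMem (ht t₀ le_rfl y hy)]
      filter_upwards [ae_all_iff.2 this] with y hy
      obtain ⟨n, hn⟩ := exists_nat_ge ‖y‖
      exact hy n hn
    · rintro rfl t _
      exact ⟨0, map_zero _⟩
end

section
/- Let u be a bounded operator on L²(ℝ₊^d) ⊗ k commuting with all the shift isometries S_x and their adjoints S_x* (x ∈ ℝ₊^d). Then u = 1_{L²(ℝ₊^d)} ⊗ v for some bounded operator v on k. In other words, the commutant of the von Neumann algebra generated by {S_x : x ∈ ℝ₊^d} is {1 ⊗ T : T ∈ B(k)}. -/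
open MeasureTheory ContinuousLinearMap

namespace ShiftAux

def QQ (d : ℕ) : Set (EuclideanSpace ℝ (Fin d)) := {y | ∀ i, 0 ≤ y i}

def sg {d : ℕ} (y : EuclideanSpace ℝ (Fin d)) : ℝ := ∑ i, y i

noncomputable def ph {d : ℕ} (y : EuclideanSpace ℝ (Fin d)) : ℂ := ((Real.exp (-sg y) : ℝ) : ℂ)

lemma sg_add {d : ℕ} (x y : EuclideanSpace ℝ (Fin d)) : sg (x + y) = sg x + sg y := by
  simp [sg, Finset.sum_add_distrib]

lemma ph_add {d : ℕ} (x y : EuclideanSpace ℝ (Fin d)) : ph (x + y) = ph x * ph y := by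
  simp only [ph, sg_add, ← Complex.ofReal_mul, ← Real.exp_add]
  congr 2; ring

lemma ph_ne {d : ℕ} (x : EuclideanSpace ℝ (Fin d)) : ph x ≠ 0 := by
  simp only [ph, ne_eq, Complex.ofReal_eq_zero]
  exact (Real.exp_pos _).ne'

lemma sg_cont {d : ℕ} : Continuous (sg (d := d)) := by
  unfold sg; fun_prop

lemma ph_cont {d : ℕ} : Continuous (ph (d := d)) := by
  unfold ph
  have := sg_cont (d := d)
  fun_prop

lemma QQ_closed (d : ℕ) : IsClosed (QQ d) := by
  have : QQ d = ⋂ i, {y | 0 ≤ y i} := by ext; simp [QQ]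
  rw [this]
  exact isClosed_iInter fun i => isClosed_le continuous_const (by fun_prop)

lemma QQ_meas (d : ℕ) : MeasurableSet (QQ d) := (QQ_closed d).measurableSet

lemma QQ_add {d : ℕ} {x y : EuclideanSpace ℝ (Fin d)} (hx : x ∈ QQ d) (hy : y ∈ QQ d) :
    x + y ∈ QQ d := fun i => add_nonneg (hx i) (hy i)

lemma QQ_pos (d : ℕ) : volume.restrict (QQ d) ≠ 0 := by
  have ho : IsOpen {y : EuclideanSpace ℝ (Fin d) | ∀ i, 0 < y i} := by
    have : {y : EuclideanSpace ℝ (Fin d) | ∀ i, 0 < y i} = ⋂ i, {y | 0 < y i} := by ext; simp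
    rw [this]
    exact isOpen_iInter_of_finite fun i => isOpen_lt continuous_const (by fun_prop)
  have hp : 0 < volume {y : EuclideanSpace ℝ (Fin d) | ∀ i, 0 < y i} :=
    ho.measure_pos _ ⟨WithLp.toLp 2 (fun _ => 1), by simp⟩
  intro h
  have h2 : volume (QQ d) = 0 := by simpa using h
  exact (hp.trans_le (measure_mono (fun y hy i => (hy i).le))).ne' h2

/-- translation inside -/
lemma mp_add {d : ℕ} (x : EuclideanSpace ℝ (Fin d)) :
    MeasurePreserving (fun y => y + x) (volume.restrict (QQ d))
      (volume.restrict {y | y - x ∈ QQ d}) := by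
  have h := (measurePreserving_add_right (volume : Measure (EuclideanSpace ℝ (Fin d))) x)
  have hm : MeasurableSet {y | y - x ∈ QQ d} := (QQ_meas d).preimage (measurable_id.sub_const x)
  have := h.restrict_preimage hm
  have e : (fun y => y + x) ⁻¹' {y | y - x ∈ QQ d} = QQ d := by ext; simp
  rwa [e] at this

lemma shift_sub {d : ℕ} {x : EuclideanSpace ℝ (Fin d)} (hx : x ∈ QQ d) :
    {y | y - x ∈ QQ d} ⊆ QQ d := fun y hy => by
  have := QQ_add hy hx
  simpa using this

lemma ae_add {d : ℕ} {x : EuclideanSpace ℝ (Fin d)} (hx : x ∈ QQ d)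
    {P : EuclideanSpace ℝ (Fin d) → Prop} (h : ∀ᵐ y ∂(volume.restrict (QQ d)), P y) :
    ∀ᵐ y ∂(volume.restrict (QQ d)), P (y + x) :=
  (mp_add x).quasiMeasurePreserving.ae (ae_restrict_of_ae_restrict_of_subset (shift_sub hx) h)

lemma ae_sub {d : ℕ} (x : EuclideanSpace ℝ (Fin d))
    {P : EuclideanSpace ℝ (Fin d) → Prop} (h : ∀ᵐ y ∂(volume.restrict (QQ d)), P y) :
    ∀ᵐ y ∂(volume.restrict (QQ d)), y - x ∈ QQ d → P (y - x) := by
  rw [ae_restrict_iff' (QQ_meas d)] at h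
  have := (measurePreserving_sub_right (volume : Measure (EuclideanSpace ℝ (Fin d))) x).quasiMeasurePreserving.ae h
  exact ae_restrict_of_ae this

lemma ph_memLp (d : ℕ) : MemLp (ph (d := d)) 2 (volume.restrict (QQ d)) := by
  rw [memLp_two_iff_integrable_sq_norm ph_cont.aestronglyMeasurable]
  have h1 : Integrable (Set.indicator (Set.Ici 0) (fun t : ℝ => Real.exp (-2 * t))) := by
    rw [integrable_indicator_iff measurableSet_Ici, integrableOn_Ici_iff_integrableOn_Ioi]
    exact exp_neg_integrableOn_Ioi 0 (by norm_num)
  have h2 := Integrable.fintype_prod (ι := Fin d) (μ := fun _ => (volume : Measure ℝ))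
    (f := fun _ => Set.indicator (Set.Ici 0) (fun t : ℝ => Real.exp (-2 * t))) (fun _ => h1)
  have h3 := (PiLp.volume_preserving_ofLp (Fin d)).integrable_comp_of_integrable h2
  change IntegrableOn _ _ _
  rw [← integrable_indicator_iff (QQ_meas d)]
  refine h3.congr (Filter.Eventually.of_forall fun y => ?_)
  symm
  by_cases hy : y ∈ QQ d
  · rw [Set.indicator_of_mem hy]
    simp only [Function.comp]
    rw [Finset.prod_congr rfl (fun i _ => Set.indicator_of_mem (s := Set.Ici (0:ℝ)) (Set.mem_Ici.2 (hy i)) _), ← Real.exp_sum]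
    simp only [ph, Complex.norm_real, Real.norm_eq_abs, sq_abs, ← Real.exp_nat_mul, sg,
      Finset.mul_sum]
    congr 1
    push_cast
    rw [← Finset.sum_neg_distrib, Finset.mul_sum]
    exact Finset.sum_congr rfl fun i _ => by ring
  · rw [Set.indicator_of_notMem hy]
    simp only [QQ, Set.mem_ofPred_eq, not_forall] at hy
    obtain ⟨i, hi⟩ := hy
    symm
    exact Finset.prod_eq_zero (Finset.mem_univ i) (Set.indicator_of_notMem (s := Set.Ici (0:ℝ)) hi _)

section
variable {d : ℕ} {k : Type*} [NormedAddCommGroup k] [InnerProductSpace ℂ k] [CompleteSpace k]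

lemma dense_aux (F : EuclideanSpace ℝ (Fin d) → k) (hF : Integrable F (volume.restrict (QQ d)))
    (h : ∀ x ∈ QQ d, ∫ y in {y | y - x ∈ QQ d}, F y ∂(volume.restrict (QQ d)) = 0) :
    F =ᵐ[volume.restrict (QQ d)] 0 := by
  refine hF.ae_eq_zero_of_forall_setIntegral_eq_zero ?_
  have h0 : ∫ y, F y ∂(volume.restrict (QQ d)) = 0 := by
    have := h 0 (fun i => by simp)
    rw [Measure.restrict_restrict (show MeasurableSet {y : EuclideanSpace ℝ (Fin d) | y - 0 ∈ QQ d} from (QQ_meas d).preimage (measurable_id.sub_const 0))] at this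
    simpa using this
  have key : ∀ t : Set (Fin d → ℝ), MeasurableSet t →
      ∫ y in (WithLp.ofLp ⁻¹' t : Set (EuclideanSpace ℝ (Fin d))), F y
        ∂(volume.restrict (QQ d)) = 0 := by
    have hm : Measurable (WithLp.ofLp : EuclideanSpace ℝ (Fin d) → (Fin d → ℝ)) :=
      (PiLp.volume_preserving_ofLp (Fin d)).measurable
    have hsp : IsCountablySpanning (Set.range (Set.Ici : ℝ → Set ℝ)) := by
      refine ⟨fun n => Set.Ici (-(n : ℝ)), fun n => ⟨_, rfl⟩, ?_⟩
      ext t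
      simp only [Set.mem_iUnion, Set.mem_Ici, Set.mem_univ, iff_true]
      obtain ⟨n, hn⟩ := exists_nat_ge (-t)
      exact ⟨n, by linarith⟩
    have hgen := generateFrom_pi_eq (ι := Fin d) (α := fun _ => ℝ)
      (C := fun _ => Set.range (Set.Ici : ℝ → Set ℝ)) (fun _ => hsp)
    have hgen' : (MeasurableSpace.pi : MeasurableSpace (Fin d → ℝ)) =
        MeasurableSpace.generateFrom (Set.univ.pi '' Set.univ.pi
          (fun _ : Fin d => Set.range (Set.Ici : ℝ → Set ℝ))) := by
      rw [← hgen]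
      congr 1
      funext i
      rw [← borel_eq_generateFrom_Ici]
      exact BorelSpace.measurable_eq
    have hpi : IsPiSystem (Set.range (Set.Ici : ℝ → Set ℝ)) := by
      rw [← Set.image_univ]; exact isPiSystem_image_Ici _
    intro t ht
    induction t, ht using MeasurableSpace.induction_on_inter hgen' (IsPiSystem.pi fun _ => hpi) with
    | empty => simp
    | basic t ht =>
      obtain ⟨s, hs, rfl⟩ := ht
      choose a ha using fun i => hs i (Set.mem_univ i)
      have hx := h (WithLp.toLp 2 fun i => max (a i) 0) (fun i => by simp)
      rw [Measure.restrict_restrict (show MeasurableSet {y : EuclideanSpace ℝ (Fin d) | y - (WithLp.toLp 2 fun i => max (a i) 0) ∈ QQ d} from (QQ_meas d).preimage (measurable_id.sub_const _))] at hx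
      rw [Measure.restrict_restrict (hm (MeasurableSet.univ_pi fun i => by
        rw [← ha i]; exact measurableSet_Ici))]
      convert hx using 3
      ext y
      simp only [Set.mem_inter_iff, Set.mem_preimage, Set.mem_pi, Set.mem_univ, forall_const,
        ← ha, Set.mem_Ici, QQ, Set.mem_ofPred_eq, PiLp.sub_apply, sub_nonneg, max_le_iff]
      constructor
      · rintro ⟨h1, h2⟩; exact ⟨fun i => ⟨h1 i, h2 i⟩, h2⟩
      · rintro ⟨h1, h2⟩; exact ⟨fun i => (h1 i).1, h2⟩
    | compl t ht ih =>
      rw [Set.preimage_compl, setIntegral_compl (hm ht) hF, ih, h0, sub_zero]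
    | iUnion f hd hfm ih =>
      rw [Set.preimage_iUnion, integral_iUnion (fun i => hm (hfm i))
        (fun i j hij => (hd hij).preimage _) hF.integrableOn]
      simp [ih]
  intro s hs _
  have h3 := key (WithLp.toLp 2 ⁻¹' s) ((MeasurableEquiv.toLp 2 (Fin d → ℝ)).measurable hs)
  exact h3

lemma memLp_shift {x : EuclideanSpace ℝ (Fin d)} (hx : x ∈ QQ d)
    (f : Lp k 2 (volume.restrict (QQ d))) :
    MemLp (fun y => f (y + x)) 2 (volume.restrict (QQ d)) :=
  ((Lp.memLp f).mono_measure (Measure.restrict_mono (shift_sub hx) le_rfl)).comp_measurePreserving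
    (mp_add x)

lemma adj_eq {x : EuclideanSpace ℝ (Fin d)} (hx : x ∈ QQ d)
    (S : Lp k 2 (volume.restrict (QQ d)) →L[ℂ] Lp k 2 (volume.restrict (QQ d)))
    (hS : ∀ f : Lp k 2 (volume.restrict (QQ d)),
      (S f : EuclideanSpace ℝ (Fin d) → k) =ᵐ[volume.restrict (QQ d)]
        fun y => Set.indicator (QQ d) (⇑f) (y - x))
    (f : Lp k 2 (volume.restrict (QQ d))) :
    (ContinuousLinearMap.adjoint S f : EuclideanSpace ℝ (Fin d) → k)
      =ᵐ[volume.restrict (QQ d)] fun y => f (y + x) := by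
  have e : ContinuousLinearMap.adjoint S f = (memLp_shift hx f).toLp _ := by
    refine ext_inner_right ℂ fun g => ?_
    rw [ContinuousLinearMap.adjoint_inner_left, L2.inner_def, L2.inner_def]
    have h1 : ∫ a, inner ℂ (f a) (S g a) ∂(volume.restrict (QQ d)) =
        ∫ a, Set.indicator (QQ d) (fun a => inner ℂ (f a) (Set.indicator (QQ d) (⇑g) (a - x))) a := by
      rw [integral_indicator (QQ_meas d)]
      refine integral_congr_ae ?_
      filter_upwards [hS g] with a ha
      rw [ha]
    have h2 : ∫ a, inner ℂ ((memLp_shift hx f).toLp _ a) (g a) ∂(volume.restrict (QQ d)) =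
        ∫ a, Set.indicator (QQ d) (fun a => inner ℂ (f (a + x)) (g a)) a := by
      rw [integral_indicator (QQ_meas d)]
      refine integral_congr_ae ?_
      filter_upwards [(memLp_shift hx f).coeFn_toLp] with a ha
      rw [ha]
    rw [h1, h2, ← integral_add_right_eq_self _ x]
    congr 1
    ext a
    by_cases ha : a ∈ QQ d
    · rw [Set.indicator_of_mem (QQ_add ha hx), Set.indicator_of_mem ha]
      simp [Set.indicator_of_mem ha]
    · rw [Set.indicator_of_notMem ha]
      by_cases hb : a + x ∈ QQ d
      · rw [Set.indicator_of_mem hb]; simp [Set.indicator_of_notMem ha]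
      · rw [Set.indicator_of_notMem hb]
  rw [e]
  exact (memLp_shift hx f).coeFn_toLp

/-- translation-invariant functions are constant -/
lemma const_aux (G : EuclideanSpace ℝ (Fin d) → k) (hG : StronglyMeasurable G)
    (h : ∀ x ∈ QQ d, ∀ᵐ y ∂(volume.restrict (QQ d)), G (y + x) = G y) :
    ∃ c, ∀ᵐ y ∂(volume.restrict (QQ d)), G y = c := by
  have hne : (ae (volume.restrict (QQ d))).NeBot := ae_neBot.2 (QQ_pos d)
  have h1 : ∀ᵐ x ∂(volume.restrict (QQ d)), ∀ᵐ y ∂(volume.restrict (QQ d)), G (y + x) = G y :=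
    ae_restrict_of_forall_mem (QQ_meas d) h
  rw [Measure.ae_ae_comm (p := fun x y => G (y + x) = G y) (StronglyMeasurable.measurableSet_eq_fun
    (hG.comp_measurable (measurable_snd.add measurable_fst))
    (hG.comp_measurable measurable_snd))] at h1
  have h2 : ∀ᵐ y ∂(volume.restrict (QQ d)), y ∈ QQ d := ae_restrict_mem (QQ_meas d)
  obtain ⟨y0, hy0, hy0Q⟩ := (h1.and h2).exists
  refine ⟨G y0, ?_⟩
  filter_upwards [h1, h2] with y hy hyQ
  obtain ⟨z, hz1, hz2⟩ := ((ae_add hyQ hy0).and (ae_add hy0Q hy)).exists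
  rw [← hz1, ← hz2]
  congr 1
  abel

lemma J_memLp (ξ : k) : MemLp (fun y => ph y • ξ) 2 (volume.restrict (QQ d)) :=
  ((ContinuousLinearMap.toSpanSingleton ℂ ξ).comp_memLp' (ph_memLp d))

noncomputable def J (ξ : k) : Lp k 2 (volume.restrict (QQ d)) := (J_memLp ξ).toLp _

lemma J_coe (ξ : k) : (J ξ : EuclideanSpace ℝ (Fin d) → k) =ᵐ[volume.restrict (QQ d)]
    fun y => ph y • ξ := (J_memLp ξ).coeFn_toLp

lemma J_add (ξ η : k) : J (d := d) (ξ + η) = J ξ + J η := by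
  apply Lp.ext
  filter_upwards [J_coe (d := d) (ξ + η), J_coe (d := d) ξ, J_coe (d := d) η,
    Lp.coeFn_add (J (d := d) ξ) (J η)] with y h1 h2 h3 h4
  rw [h4, h1, Pi.add_apply, h2, h3, smul_add]

lemma J_smul (c : ℂ) (ξ : k) : J (d := d) (c • ξ) = c • J ξ := by
  apply Lp.ext
  filter_upwards [J_coe (d := d) (c • ξ), J_coe (d := d) ξ,
    Lp.coeFn_smul c (J (d := d) ξ)] with y h1 h2 h4
  rw [h4, h1, Pi.smul_apply, h2, smul_comm]

lemma J_norm (ξ : k) : ‖J (d := d) ξ‖ =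
    ‖ξ‖ * (eLpNorm (ph (d := d)) 2 (volume.restrict (QQ d))).toReal := by
  rw [J, Lp.norm_toLp]
  have : eLpNorm (fun y : EuclideanSpace ℝ (Fin d) => ph y • ξ) 2 (volume.restrict (QQ d)) =
      eLpNorm (((‖ξ‖ : ℝ) : ℂ) • (ph (d := d))) 2 (volume.restrict (QQ d)) := by
    refine eLpNorm_congr_norm_ae (Filter.Eventually.of_forall fun y => ?_)
    simp [norm_smul, mul_comm]
  rw [this, eLpNorm_const_smul, ENNReal.toReal_mul]
  simp

lemma ph_norm_pos : 0 < (eLpNorm (ph (d := d)) 2 (volume.restrict (QQ d))).toReal := by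
  refine ENNReal.toReal_pos ?_ (ph_memLp d).2.ne
  intro h
  rw [eLpNorm_eq_zero_iff ph_cont.aestronglyMeasurable (by norm_num)] at h
  have hne : (ae (volume.restrict (QQ d))).NeBot := ae_neBot.2 (QQ_pos d)
  obtain ⟨y, hy⟩ := h.exists
  exact ph_ne y hy

lemma J_inj {ξ η : k} (h : J (d := d) ξ = J η) : ξ = η := by
  have h1 : J (d := d) (ξ + (-1 : ℂ) • η) = 0 := by
    rw [J_add, J_smul, h]; simp
  have h2 := J_norm (d := d) (ξ + (-1 : ℂ) • η)
  rw [h1, norm_zero] at h2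
  have h3 := (mul_eq_zero.1 h2.symm).resolve_right ph_norm_pos.ne'
  rw [norm_eq_zero] at h3
  simpa [← sub_eq_add_neg, sub_eq_zero] using h3

end

end ShiftAux

set_option maxHeartbeats 2000000 in
open ShiftAux in
/-- Any bounded operator on `L²(ℝ₊^d, k)` commuting with all shift isometries and their
adjoints is of the form `1 ⊗ v` for a bounded operator `v` on `k`: the commutant of the
von Neumann algebra generated by the shifts is `1 ⊗ B(k)`. -/
theorem shift_commutant {d : ℕ}
    {k : Type*} [NormedAddCommGroup k] [InnerProductSpace ℂ k] [CompleteSpace k]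
    [SecondCountableTopology k]
    (Q : Set (EuclideanSpace ℝ (Fin d)))
    (hQ : Q = {y : EuclideanSpace ℝ (Fin d) | ∀ i, 0 ≤ y i})
    (S : EuclideanSpace ℝ (Fin d) →
      (Lp k 2 (volume.restrict Q) →L[ℂ] Lp k 2 (volume.restrict Q)))
    (hS : ∀ x ∈ Q, ∀ f : Lp k 2 (volume.restrict Q),
      (S x f : EuclideanSpace ℝ (Fin d) → k) =ᵐ[volume.restrict Q]
        fun y => Set.indicator Q (⇑f) (y - x))
    (u : Lp k 2 (volume.restrict Q) →L[ℂ] Lp k 2 (volume.restrict Q))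
    (hu₁ : ∀ x ∈ Q, u ∘L S x = S x ∘L u)
    (hu₂ : ∀ x ∈ Q, u ∘L ContinuousLinearMap.adjoint (S x)
      = ContinuousLinearMap.adjoint (S x) ∘L u) :
    ∃ v : k →L[ℂ] k, ∀ f : Lp k 2 (volume.restrict Q),
      (u f : EuclideanSpace ℝ (Fin d) → k) =ᵐ[volume.restrict Q] fun y => v (f y) := by
  change Q = QQ d at hQ
  subst hQ
  -- action on exponentials
  have hc : ∀ ξ : k, ∃ c : k, u (J ξ) = J c := by
    intro ξ
    have hh : ∀ x ∈ QQ d, ∀ᵐ y ∂(volume.restrict (QQ d)),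
        (u (J ξ)) (y + x) = ph x • (u (J ξ)) y := by
      intro x hx
      have e1 : ContinuousLinearMap.adjoint (S x) (J ξ) = ph x • J ξ := by
        apply Lp.ext
        filter_upwards [adj_eq hx (S x) (hS x hx) (J ξ), J_coe (d := d) ξ,
          ae_add hx (J_coe (d := d) ξ), Lp.coeFn_smul (ph x) (J (d := d) ξ)] with y h1 h2 h3 h4
        rw [h1, h4, Pi.smul_apply, h3, h2, ph_add, smul_smul, mul_comm]
      have e2 : ContinuousLinearMap.adjoint (S x) (u (J ξ)) = ph x • u (J ξ) := by
        rw [← map_smul, ← e1]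
        exact (DFunLike.congr_fun (hu₂ x hx) (J ξ)).symm
      filter_upwards [adj_eq hx (S x) (hS x hx) (u (J ξ)),
        Lp.coeFn_smul (ph x) (u (J (d := d) ξ))] with y h1 h2
      rw [← h1, e2, h2, Pi.smul_apply]
    obtain ⟨c, hc⟩ := const_aux (fun y => (ph y)⁻¹ • (u (J ξ)) y)
      ((ph_cont.inv₀ ph_ne).stronglyMeasurable.smul (Lp.stronglyMeasurable _)) (by
        intro x hx
        filter_upwards [hh x hx] with y hy
        rw [hy, ph_add, smul_smul]
        congr 1
        have := ph_ne x
        have := ph_ne y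
        field_simp)
    refine ⟨c, Lp.ext ?_⟩
    filter_upwards [hc, J_coe (d := d) c] with y h1 h2
    rw [h2, ← h1, smul_smul, mul_inv_cancel₀ (ph_ne y), one_smul]
  choose v0 hv0 using hc
  let vl : k →ₗ[ℂ] k :=
    { toFun := v0
      map_add' := fun ξ η => J_inj (d := d) (by
        rw [← hv0, J_add, J_add, map_add, hv0, hv0])
      map_smul' := fun c ξ => J_inj (d := d) (by
        rw [← hv0, J_smul, RingHom.id_apply, J_smul, map_smul, hv0]) }
  let v : k →L[ℂ] k := vl.mkContinuous ‖u‖ (fun ξ => by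
    have h1 := u.le_opNorm (J ξ)
    rw [hv0, J_norm, J_norm, ← mul_assoc] at h1
    exact le_of_mul_le_mul_right h1 ph_norm_pos)
  have hv : ∀ ξ, u (J ξ) = J (v ξ) := hv0
  have hSJ : ∀ x ∈ QQ d, ∀ ξ : k, (S x (J ξ) : EuclideanSpace ℝ (Fin d) → k)
      =ᵐ[volume.restrict (QQ d)] fun y => Set.indicator (QQ d) (fun z => ph z • ξ) (y - x) := by
    intro x hx ξ
    filter_upwards [hS x hx (J ξ), ae_sub x (J_coe (d := d) ξ)] with y h1 h2
    rw [h1]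
    by_cases hy : y - x ∈ QQ d
    · rw [Set.indicator_of_mem hy, Set.indicator_of_mem hy, h2 hy]
    · rw [Set.indicator_of_notMem hy, Set.indicator_of_notMem hy]
  let w := ContinuousLinearMap.compLpL 2 (volume.restrict (QQ d)) v
  have huw : ∀ x ∈ QQ d, ∀ ξ : k, (u - w) (S x (J ξ)) = 0 := by
    intro x hx ξ
    rw [_root_.sub_apply, sub_eq_zero]
    have e1 : u (S x (J ξ)) = S x (J (v ξ)) := by
      rw [← hv]; exact DFunLike.congr_fun (hu₁ x hx) (J ξ)
    rw [e1]
    apply Lp.ext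
    filter_upwards [hSJ x hx ξ, hSJ x hx (v ξ),
      ContinuousLinearMap.coeFn_compLpL (p := 2) v (S x (J ξ))] with y h1 h2 h3
    rw [h2, h3, h1]
    by_cases hy : y - x ∈ QQ d
    · rw [Set.indicator_of_mem hy, Set.indicator_of_mem hy, map_smul]
    · rw [Set.indicator_of_notMem hy, Set.indicator_of_notMem hy, map_zero]
  have hz : ∀ g : Lp k 2 (volume.restrict (QQ d)),
      ContinuousLinearMap.adjoint (u - w) g = 0 := by
    intro g
    set f := ContinuousLinearMap.adjoint (u - w) g with hf
    have horth : ∀ x ∈ QQ d, ∀ ξ : k, inner ℂ (S x (J ξ)) f = 0 := by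
      intro x hx ξ
      rw [hf, ContinuousLinearMap.adjoint_inner_right, huw x hx ξ, inner_zero_left]
    have hint : Integrable (fun y => ph y • f y) (volume.restrict (QQ d)) := by
      rw [← memLp_one_iff_integrable]
      exact (Lp.memLp f).smul (ph_memLp d)
    have hd := dense_aux (fun y => ph y • f y) hint (by
      intro x hx
      have hms : MeasurableSet {y | y - x ∈ QQ d} :=
        (QQ_meas d).preimage (measurable_id.sub_const x)
      refine ext_inner_left ℂ fun ξ => ?_
      rw [← integral_inner hint.integrableOn, inner_zero_right, ← integral_indicator hms]
      have h1 := horth x hx ξ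
      rw [L2.inner_def] at h1
      have h2 : ∫ y, Set.indicator {y | y - x ∈ QQ d} (fun y => inner ℂ ξ (ph y • f y)) y
          ∂(volume.restrict (QQ d)) = ph x * ∫ y, inner ℂ (S x (J ξ) y) (f y)
            ∂(volume.restrict (QQ d)) := by
        rw [← integral_const_mul]
        refine integral_congr_ae ?_
        filter_upwards [hSJ x hx ξ] with y h3
        rw [h3]
        by_cases hy : y - x ∈ QQ d
        · rw [Set.indicator_of_mem hy, Set.indicator_of_mem (by exact hy), inner_smul_left,
            inner_smul_right, ← mul_assoc]
          congr 1
          have : (starRingEnd ℂ) (ph (y - x)) = ph (y - x) := Complex.conj_ofReal _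
          rw [this, ← ph_add]
          congr 1
          abel
        · rw [Set.indicator_of_notMem hy, Set.indicator_of_notMem (by exact hy), inner_zero_left,
            mul_zero]
      rw [h2, h1, mul_zero])
    apply Lp.ext
    filter_upwards [hd, Lp.coeFn_zero k 2 (volume.restrict (QQ d))] with y h1 h2
    rw [h2]
    exact (smul_eq_zero.1 h1).resolve_left (ph_ne y)
  have huw0 : u = w := by
    have : ContinuousLinearMap.adjoint (u - w) = 0 := ContinuousLinearMap.ext hz
    rw [← sub_eq_zero]
    rw [← ContinuousLinearMap.adjoint_adjoint (u - w), this, map_zero]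
  refine ⟨v, fun f => ?_⟩
  rw [huw0]
  exact ContinuousLinearMap.coeFn_compLpL (p := 2) v f
end
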